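/- Let k ≥ 3, e ≥ 2, t ≥ 1, and let M be a k-nestable ordered k-uniform matching with e edges. Then OR_t(M) ≤ (ek)^{(2e−1)^{t−1}}. -/

import Mathlib

/-- An ordered hypergraph with vertex set `{1, …, n}` (with its natural order)
and edges given as finite sets of vertices. -/
structure OrderedHypergraph where
  n : ℕ
  edges : Finset (Finset ℕ)

/-- An ordered hypergraph `G` is contained in an ordered hypergraph `H` if there is an
injective, order-preserving map from the vertices of `G` to the vertices of `H` such that
edges of `G` map to edges of `H`. -/
def OrderedHypergraph.Contains (H G : OrderedHypergraph) : Prop :=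
  ∃ f : ℕ → ℕ, StrictMono f ∧ (∀ v ∈ Finset.Icc 1 G.n, f v ∈ Finset.Icc 1 H.n) ∧
    ∀ A ∈ G.edges, A.image f ∈ H.edges

/-- The complete `k`-uniform ordered hypergraph `K_N^k` on the vertex set `{1, …, N}`. -/
def completeHG (k N : ℕ) : OrderedHypergraph :=
  ⟨N, Finset.powersetCard k (Finset.Icc 1 N)⟩

/-- The `i`-colored subgraph of `K_N^k` under the coloring `c`. -/
def coloredSubgraph (k N : ℕ) {t : ℕ} (c : Finset ℕ → Fin t) (i : Fin t) : OrderedHypergraph :=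
  ⟨N, (Finset.powersetCard k (Finset.Icc 1 N)).filter fun A => c A = i⟩

/-- The ordered Ramsey number `OR(G 0, …, G (t-1))` of `k`-uniform ordered hypergraphs:
the minimum `N` such that every `t`-coloring of the edges of `K_N^k` contains, for some
color `i`, a copy of `G i` in the `i`-colored subgraph. -/
noncomputable def ORnum (k : ℕ) {t : ℕ} (G : Fin t → OrderedHypergraph) : ℕ :=
  sInf {N | ∀ c : Finset ℕ → Fin t, ∃ i, (coloredSubgraph k N c i).Contains (G i)}

/-- The `(k,ℓ)`-path `P_e^{k,ℓ}` with `e` edges: the ordered `k`-uniform hypergraph on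
vertex set `{1, …, e(k-ℓ)+ℓ}` with edges `A_r = {(r-1)(k-ℓ)+1, …, (r-1)(k-ℓ)+k}`. -/
def loosePath (k l e : ℕ) : OrderedHypergraph :=
  ⟨e * (k - l) + l,
    (Finset.range e).image fun r => Finset.Icc (r * (k - l) + 1) (r * (k - l) + k)⟩


/-- The ordered `k`-uniform hypergraph `G_s^k`, defined iteratively: `G_0^k` is a single
vertex with no edges, and `G_{s+1}^k` (on vertex set `{1, …, k^{s+1}}`) consists of `k`
disjoint consecutive copies of `G_s^k` (copy `j` occupying `{j·k^s + 1, …, (j+1)·k^s}`)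
together with every `k`-element edge having exactly one vertex in each copy. -/
def iterGraph (k : ℕ) : ℕ → OrderedHypergraph
  | 0 => ⟨1, ∅⟩
  | s + 1 =>
      ⟨k ^ (s + 1),
        ((Finset.range k).biUnion fun j =>
            (iterGraph k s).edges.image fun A => A.image fun x => x + j * k ^ s) ∪
          (Finset.powersetCard k (Finset.Icc 1 (k ^ (s + 1)))).filter fun A =>
            ∀ j ∈ Finset.range k,
              (A ∩ Finset.Icc (j * k ^ s + 1) ((j + 1) * k ^ s)).card = 1⟩

/-- `M` is an ordered `k`-uniform matching: each edge is a `k`-element subset of the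
vertex set `{1, …, M.n}`, and the edges are pairwise disjoint. -/
def IsOrderedMatching (k : ℕ) (M : OrderedHypergraph) : Prop :=
  (∀ A ∈ M.edges, A.card = k ∧ A ⊆ Finset.Icc 1 M.n) ∧
    ∀ A ∈ M.edges, ∀ B ∈ M.edges, A ≠ B → Disjoint A B

/-- The support (vertex set) of a set of edges: the union of the edges. -/
def edgeSupport (E : Finset (Finset ℕ)) : Finset ℕ := E.sup id

/-- A set of edges `E` (of an ordered `k`-uniform matching) is `k`-nestable:  either it
is empty, or there are `k` disjoint consecutive intervals `I 0 < I 1 < ⋯ < I (k-1)` of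
the support (some possibly empty or degenerate) spanning the support, the first
containing the least vertex and the last containing the greatest vertex, such that every
edge is either contained in one of the intervals or has exactly one vertex in each
interval, and for each `j` the set of edges contained in `I j` is itself `k`-nestable. -/
inductive KNestable (k : ℕ) : Finset (Finset ℕ) → Prop where
  | empty : KNestable k ∅
  | nest (E : Finset (Finset ℕ)) (hk : 0 < k) (I : Fin k → Finset ℕ)
      (hord : ∀ j j' : Fin k, j < j' → ∀ x ∈ I j, ∀ y ∈ I j', x < y)
      (hspan : edgeSupport E = Finset.univ.biUnion fun j => I j)
      (hint : ∀ j : Fin k, ∀ x ∈ I j, ∀ y ∈ I j, ∀ z ∈ edgeSupport E,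
        x ≤ z → z ≤ y → z ∈ I j)
      (hfirst : ∀ x ∈ edgeSupport E, ∃ y ∈ I ⟨0, hk⟩, y ≤ x)
      (hlast : ∀ x ∈ edgeSupport E, ∃ y ∈ I ⟨k - 1, Nat.sub_lt hk Nat.one_pos⟩, x ≤ y)
      (hedges : ∀ A ∈ E, (∃ j, A ⊆ I j) ∨ ∀ j, (A ∩ I j).card = 1)
      (hrec : ∀ j : Fin k, KNestable k (E.filter fun A => A ⊆ I j)) :
      KNestable k E

/-!
Read the nesting of `M` as a rooted tree of depth at most `2e - 1`: a vertex set at one level is cut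
into `k` consecutive parts, and every edge either lies in one part or meets all of them.

To pass from `t` colors to `t + 1`, let `N` suffice for `t` colors and cut an interval of length
`N ^ s` into `N` blocks of length `N ^ (s - 1)`. Suppose every `k`-set `B` of blocks carries an edge
meeting each block of `B` whose color is not `0`. Coloring `B` by that color gives a monochromatic
copy of the matching among the blocks; as matching edges are disjoint, it lifts to the vertices.
Otherwise, all edges across some `k` blocks have color `0`. By recursion each of these blocks
contains a copy of a matching in a nonzero color, or copies in color `0` of all the parts of a
nesting of depth `s`. In the latter case placing the `j`-th part in the `j`-th block completes a
copy in color `0`. A single color needs only `ek` vertices.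
-/

open Finset

/-- The ordered hypergraph with vertex set `V` and edge set `E` has a copy in the ordered hypergraph
with vertex set `W` and edge set `H`. Only the values of the embedding on `V` matter. -/
def CopyIn (V : Finset ℕ) (E : Finset (Finset ℕ)) (W : Finset ℕ) (H : Set (Finset ℕ)) : Prop :=
  ∃ f : ℕ → ℕ, StrictMonoOn f V ∧ Set.MapsTo f V W ∧ ∀ A ∈ E, A.image f ∈ H

/-- The Ramsey arrow `N → (G 0, …, G (t - 1))`, for edge sets `G i` without isolated vertices. The
colored vertex set is any interval of length `N`, so that the notion applies directly to the blocks
of a larger interval. -/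
def Arrows {t : ℕ} (G : Fin t → Finset (Finset ℕ)) (N : ℕ) : Prop :=
  ∀ (a : ℕ) (c : Finset ℕ → Fin t),
    ∃ i, CopyIn (edgeSupport (G i)) (G i) (Ico a (a + N)) {A | c A = i}

/-- The hypergraph `(V, E)` is nested to depth `s`: its vertices are cut `s` times into `k`
consecutive parts (`J` being the index of the part) until single vertices remain, each edge either
lying in one part or meeting all of them. For `k`-uniform `E` this says that `(V, E)` is contained
in `iterGraph k s`. Unlike for `KNestable`, vertices outside every edge are allowed. -/
inductive NestedToDepth (k : ℕ) : ℕ → Finset ℕ → Finset (Finset ℕ) → Prop where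
  | zero {V : Finset ℕ} (hV : #V ≤ 1) : NestedToDepth k 0 V ∅
  | succ {s : ℕ} {V : Finset ℕ} {E : Finset (Finset ℕ)} (J : ℕ → Fin k) (hJ : Monotone J)
      (hE : ∀ A ∈ E, (∃ j, A ⊆ {x ∈ V | J x = j}) ∨ A ⊆ V ∧ A.image J = univ)
      (hrec : ∀ j, NestedToDepth k s {x ∈ V | J x = j} {A ∈ E | A ⊆ {x ∈ V | J x = j}}) :
      NestedToDepth k (s + 1) V E

lemma mem_edgeSupport {E : Finset (Finset ℕ)} {x : ℕ} :
    x ∈ edgeSupport E ↔ ∃ A ∈ E, x ∈ A := by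
  simp [edgeSupport]

lemma subset_edgeSupport {E : Finset (Finset ℕ)} {A : Finset ℕ} (hA : A ∈ E) :
    A ⊆ edgeSupport E :=
  le_sup (f := id) hA

lemma edgeSupport_subset_iff {E : Finset (Finset ℕ)} {V : Finset ℕ} :
    edgeSupport E ⊆ V ↔ ∀ A ∈ E, A ⊆ V :=
  Finset.sup_le_iff

section Nesting

variable {k : ℕ}

lemma nestedToDepth_empty (hk : 2 ≤ k) {s : ℕ} {V : Finset ℕ} (hV : #V ≤ s + 1) :
    NestedToDepth k s V ∅ := by
  induction s generalizing V with
  | zero => exact .zero hV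
  | succ s ih =>
    rcases V.eq_empty_or_nonempty with rfl | hne
    · exact .succ (fun _ ↦ ⟨0, by lia⟩) monotone_const (by simp) fun _ ↦ ih (by simp)
    obtain ⟨m, hm, hmin⟩ : ∃ m ∈ V, ∀ x ∈ V, m ≤ x := ⟨_, V.min'_mem hne, V.min'_le⟩
    let J : ℕ → Fin k := fun x ↦ if x ≤ m then ⟨0, by lia⟩ else ⟨1, by lia⟩
    have hJ : Monotone J := by
      intro x y hxy
      simp only [J]
      split_ifs <;> first | lia | simp
    have hlow : {x ∈ V | J x = ⟨0, by lia⟩} ⊆ {m} := by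
      grind
    have hhigh : ∀ j ≠ ⟨0, by lia⟩, {x ∈ V | J x = j} ⊆ V.erase m := by
      grind
    refine .succ J hJ (by simp) fun j ↦ ih ?_
    by_cases hj : j = ⟨0, by lia⟩
    · subst hj
      exact (card_le_card hlow).trans (by simp)
    · have := card_le_card (hhigh j hj)
      rw [card_erase_of_mem hm] at this
      lia

/-- The index of the last interval of `I` that begins at or before `x`; it extends the partition of
`⋃ j, I j` to all vertices. The value is `0` if there is no such interval. -/
noncomputable def intervalIndex [NeZero k] (I : Fin k → Finset ℕ) (x : ℕ) : Fin k :=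
  ({j | ∃ y ∈ I j, y ≤ x} : Finset (Fin k)).sup id

lemma monotone_intervalIndex [NeZero k] (I : Fin k → Finset ℕ) : Monotone (intervalIndex I) :=
  fun _ _ hxy ↦ sup_mono <| monotone_filter_right _
    fun _ _ ⟨y, hy, hyx⟩ ↦ ⟨y, hy, hyx.trans hxy⟩

variable {I : Fin k → Finset ℕ} (hord : ∀ j j' : Fin k, j < j' → ∀ x ∈ I j, ∀ y ∈ I j', x < y)

include hord

lemma intervalIndex_eq [NeZero k] {j : Fin k} {x : ℕ} (hx : x ∈ I j) : intervalIndex I x = j := by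
  refine le_antisymm (Finset.sup_le fun j' hj' ↦ ?_) (le_sup (f := id) ?_)
  · obtain ⟨y, hy, hyx⟩ := (mem_filter.1 hj').2
    exact le_of_not_gt fun hlt ↦ (hord j j' hlt x hx y hy).not_ge hyx
  · exact mem_filter.2 ⟨mem_univ _, x, hx, le_rfl⟩

lemma intervalIndex_eq_iff [NeZero k] {j : Fin k} {x : ℕ} (hx : x ∈ univ.biUnion I) :
    intervalIndex I x = j ↔ x ∈ I j := by
  obtain ⟨j', -, hxj'⟩ := mem_biUnion.1 hx
  exact ⟨fun h ↦ h ▸ intervalIndex_eq hord hxj' ▸ hxj', intervalIndex_eq hord⟩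

lemma subset_part_iff [NeZero k] {A V : Finset ℕ} {j : Fin k} (hAV : A ⊆ V)
    (hA : A ⊆ univ.biUnion I) : A ⊆ {x ∈ V | intervalIndex I x = j} ↔ A ⊆ I j :=
  forall₂_congr fun x hx ↦ by
    rw [mem_filter, and_iff_right (hAV hx), intervalIndex_eq_iff hord (hA hx)]

lemma disjoint_interval {j j' : Fin k} (hne : j ≠ j') : Disjoint (I j) (I j') := by
  refine disjoint_left.2 fun x hx hx' ↦ ?_
  rcases hne.lt_or_gt with h | h
  · exact (hord _ _ h x hx x hx').false
  · exact (hord _ _ h x hx' x hx).false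

variable {E : Finset (Finset ℕ)}

-- Such a vertex lies on an edge that meets several intervals, hence meets `I j` only once.
lemma card_interval_sdiff_edgeSupport_le
    (hedges : ∀ A ∈ E, (∃ j, A ⊆ I j) ∨ ∀ j, #(A ∩ I j) = 1) {j : Fin k}
    (hI : I j ⊆ edgeSupport E) :
    #(I j \ edgeSupport {A ∈ E | A ⊆ I j}) ≤ #{A ∈ E | ¬A ⊆ I j} := by
  have hcover : I j \ edgeSupport {A ∈ E | A ⊆ I j} ⊆ {A ∈ E | ¬A ⊆ I j}.biUnion (· ∩ I j) := by
    intro x hx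
    obtain ⟨hxI, hxE⟩ := mem_sdiff.1 hx
    obtain ⟨A, hA, hxA⟩ := mem_edgeSupport.1 (hI hxI)
    have hAI : ¬A ⊆ I j := fun h ↦ hxE (mem_edgeSupport.2 ⟨A, mem_filter.2 ⟨hA, h⟩, hxA⟩)
    exact mem_biUnion.2 ⟨A, mem_filter.2 ⟨hA, hAI⟩, mem_inter.2 ⟨hxA, hxI⟩⟩
  have hmeet : ∀ A ∈ {A ∈ E | ¬A ⊆ I j}, #(A ∩ I j) ≤ 1 := by
    intro A hA
    obtain ⟨hA, hAI⟩ := mem_filter.1 hA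
    rcases hedges A hA with ⟨j', hj'⟩ | htrans
    · have hne : j' ≠ j := fun h ↦ hAI (h ▸ hj')
      simp [disjoint_iff_inter_eq_empty.1 ((disjoint_interval hord hne).mono_left hj')]
    · exact (htrans j).le
  simpa using (card_le_card hcover).trans (card_biUnion_le_card_mul _ _ 1 hmeet)

lemma card_part_sdiff_edgeSupport_le [NeZero k] (hspan : edgeSupport E = univ.biUnion I)
    (hedges : ∀ A ∈ E, (∃ j, A ⊆ I j) ∨ ∀ j, #(A ∩ I j) = 1) (V : Finset ℕ) (j : Fin k) :
    #({x ∈ V | intervalIndex I x = j} \ edgeSupport {A ∈ E | A ⊆ I j}) ≤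
      #(V \ edgeSupport E) + #{A ∈ E | ¬A ⊆ I j} := by
  have hsub : {x ∈ V | intervalIndex I x = j} \ edgeSupport {A ∈ E | A ⊆ I j} ⊆
      (V \ edgeSupport E) ∪ (I j \ edgeSupport {A ∈ E | A ⊆ I j}) := by
    intro x hx
    obtain ⟨hxV, hxE⟩ := mem_sdiff.1 hx
    obtain ⟨hxV, hxj⟩ := mem_filter.1 hxV
    by_cases hxS : x ∈ edgeSupport E
    · have hxI : x ∈ I j := (intervalIndex_eq_iff hord (hspan ▸ hxS)).1 hxj
      exact mem_union_right _ (mem_sdiff.2 ⟨hxI, hxE⟩)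
    · exact mem_union_left _ (mem_sdiff.2 ⟨hxV, hxS⟩)
  have hI : I j ⊆ edgeSupport E := hspan ▸ subset_biUnion_of_mem I (mem_univ j)
  grw [hsub, card_union_le, card_interval_sdiff_edgeSupport_le hord hedges hI]

end Nesting

lemma KNestable.two_le {k : ℕ} {E : Finset (Finset ℕ)} (h : KNestable k E) (hE : E.Nonempty) :
    2 ≤ k := by
  induction h with
  | empty => simp at hE
  | nest E hk0 I hord hspan hint hfirst hlast hedges hrec ih =>
    by_contra hk
    obtain rfl : k = 1 := by lia
    have hall : {A ∈ E | A ⊆ I 0} = E :=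
      filter_true_of_mem fun A hA ↦ (subset_edgeSupport hA).trans (by simp [hspan])
    exact hk (ih 0 (hall.symm ▸ hE))

-- The measure `2 * #E + #(V \ edgeSupport E)` drops in each part not containing all edges, because
-- every edge lost leaves at most one vertex of the part uncovered.
theorem KNestable.nestedToDepth {k : ℕ} (hk : 2 ≤ k) {E : Finset (Finset ℕ)} (h : KNestable k E)
    {s : ℕ} {V : Finset ℕ} (hV : edgeSupport E ⊆ V)
    (hs : 2 * #E + #(V \ edgeSupport E) ≤ s + 1) : NestedToDepth k s V E := by
  induction h generalizing s V with
  | empty => exact nestedToDepth_empty hk (by simpa [edgeSupport] using hs)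
  | nest E hk0 I hord hspan _ _ _ hedges _ ih =>
    by_cases hall : ∃ j, ∀ A ∈ E, A ⊆ I j
    · obtain ⟨j, hj⟩ := hall
      have hEj := filter_true_of_mem hj
      exact hEj ▸ ih j (hEj.symm ▸ hV) (hEj.symm ▸ hs)
    push Not at hall
    have : NeZero k := ⟨hk0.ne'⟩
    have hpart : ∀ A ∈ E, ∀ j, A ⊆ {x ∈ V | intervalIndex I x = j} ↔ A ⊆ I j := fun A hA _ ↦
      subset_part_iff hord ((subset_edgeSupport hA).trans hV) (hspan ▸ subset_edgeSupport hA)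
    have hEpos : 0 < #E := card_pos.2 ((hall 0).imp fun _ ↦ And.left)
    obtain ⟨s, rfl⟩ : ∃ s', s = s' + 1 := ⟨s - 1, by lia⟩
    refine .succ (intervalIndex I) (monotone_intervalIndex I) (fun A hA ↦ ?_) fun j ↦ ?_
    · refine (hedges A hA).imp (fun ⟨j, hj⟩ ↦ ⟨j, (hpart A hA j).2 hj⟩) fun htrans ↦
        ⟨(subset_edgeSupport hA).trans hV, eq_univ_of_forall fun j ↦ ?_⟩
      obtain ⟨x, hx⟩ := card_pos.1 ((htrans j).symm ▸ one_pos)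
      exact mem_image.2 ⟨x, (mem_inter.1 hx).1, intervalIndex_eq hord (mem_inter.1 hx).2⟩
    · rw [filter_congr fun A hA ↦ hpart A hA j]
      have hsub : edgeSupport {A ∈ E | A ⊆ I j} ⊆ {x ∈ V | intervalIndex I x = j} :=
        edgeSupport_subset_iff.2 fun A hA ↦
          (hpart A (mem_filter.1 hA).1 j).2 (mem_filter.1 hA).2
      obtain ⟨A, hA, hAj⟩ := hall j
      have hlost : 0 < #{A ∈ E | ¬A ⊆ I j} := card_pos.2 ⟨A, mem_filter.2 ⟨hA, hAj⟩⟩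
      have hsplit := card_filter_add_card_filter_not (s := E) (· ⊆ I j)
      have hnew := card_part_sdiff_edgeSupport_le hord hspan hedges V j
      exact ih j hsub (by lia)

lemma Ico_block_subset {a b n N : ℕ} (hb : b < N) :
    Ico (a + b * n) (a + b * n + n) ⊆ Ico a (a + N * n) := by
  have : (b + 1) * n ≤ N * n := Nat.mul_le_mul_right n hb
  exact Ico_subset_Ico (by lia) (by lia)

lemma sub_div_eq_of_mem_block {a b n x : ℕ} (hx : x ∈ Ico (a + b * n) (a + b * n + n)) :
    (x - a) / n = b := by
  rw [mem_Ico] at hx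
  exact Nat.div_eq_of_lt_le (by lia) (by lia)

section Ramsey

variable {V W : Finset ℕ} {E : Finset (Finset ℕ)} {H : Set (Finset ℕ)} {k : ℕ}

lemma CopyIn.mono {W' : Finset ℕ} (hW : W ⊆ W') (h : CopyIn V E W H) : CopyIn V E W' H :=
  let ⟨f, hf, hfW, hfH⟩ := h
  ⟨f, hf, fun _ hx ↦ hW (hfW hx), hfH⟩

lemma copyIn_of_lift (hE : (E : Set (Finset ℕ)).PairwiseDisjoint id) {π f : ℕ → ℕ}
    (hπ : Monotone π) (hf : StrictMonoOn f (edgeSupport E))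
    (hlift : ∀ A ∈ E, ∃ X ∈ H, X ⊆ W ∧ #X ≤ #A ∧ A.image f ⊆ X.image π) :
    CopyIn (edgeSupport E) E W H := by
  choose! X hXH hXW hXcard hXπ using hlift
  have hvertex : ∀ x ∈ edgeSupport E, ∃ y, π y = f x ∧ ∀ A ∈ E, x ∈ A → y ∈ X A := by
    intro x hx
    obtain ⟨A, hA, hxA⟩ := mem_edgeSupport.1 hx
    obtain ⟨y, hy, hyx⟩ := mem_image.1 (hXπ A hA (mem_image_of_mem f hxA))
    refine ⟨y, hyx, fun A' hA' hxA' ↦ ?_⟩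
    rwa [hE.elim_finset hA' hA x hxA' hxA]
  choose! F hFπ hFX using hvertex
  have hF : StrictMonoOn F (edgeSupport E) := by
    intro x hx y hy hxy
    have := hf hx hy hxy
    rw [← hFπ x hx, ← hFπ y hy] at this
    exact hπ.reflect_lt this
  refine ⟨F, hF, fun x hx ↦ ?_, fun A hA ↦ ?_⟩
  · obtain ⟨A, hA, hxA⟩ := mem_edgeSupport.1 hx
    exact hXW A hA (hFX x hx A hA hxA)
  · have hAS := subset_edgeSupport hA
    have hsub : A.image F ⊆ X A := image_subset_iff.2 fun x hx ↦ hFX x (hAS hx) A hA hx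
    have hcard : #(A.image F) = #A := card_image_of_injOn (hF.injOn.mono hAS)
    rw [eq_of_subset_of_card_le hsub ((hXcard A hA).trans hcard.ge)]
    exact hXH A hA

lemma copyIn_of_parts {J : ℕ → Fin k} (hJ : Monotone J)
    (hE : ∀ A ∈ E, (∃ j, A ⊆ {x ∈ V | J x = j}) ∨ A ⊆ V ∧ A.image J = univ)
    (hunif : ∀ A ∈ E, #A = k) {P : Fin k → Finset ℕ} (hPW : ∀ j, P j ⊆ W)
    (hP : ∀ i j, i < j → ∀ x ∈ P i, ∀ y ∈ P j, x < y)
    (hpart : ∀ j, CopyIn {x ∈ V | J x = j} {A ∈ E | A ⊆ {x ∈ V | J x = j}} (P j) H)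
    (htrans : ∀ X ∈ powersetCard k W, (∀ j, (X ∩ P j).Nonempty) → X ∈ H) : CopyIn V E W H := by
  choose f hf hfP hfH using hpart
  have hmem : ∀ x ∈ V, f (J x) x ∈ P (J x) := fun x hx ↦ hfP (J x) (by simpa using hx)
  have hmono : StrictMonoOn (fun x ↦ f (J x) x) V := by
    intro x hx y hy hxy
    rcases (hJ hxy.le).lt_or_eq with hlt | heq
    · exact hP _ _ hlt _ (hmem x hx) _ (hmem y hy)
    · have := hf (J y) (by simpa [heq] using hx) (by simpa using hy) hxy
      simpa only [heq] using this
  refine ⟨fun x ↦ f (J x) x, hmono, fun x hx ↦ hPW _ (hmem x hx), fun A hA ↦ ?_⟩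
  rcases hE A hA with ⟨j, hAj⟩ | ⟨hAV, hAJ⟩
  · have hcongr : A.image (fun x ↦ f (J x) x) = A.image (f j) :=
      image_congr fun x hx ↦ by rw [(mem_filter.1 (hAj hx)).2]
    rw [hcongr]
    exact hfH j A (mem_filter.2 ⟨hA, hAj⟩)
  · refine htrans _ (mem_powersetCard.2 ⟨?_, ?_⟩) fun j ↦ ?_
    · exact image_subset_iff.2 fun x hx ↦ hPW _ (hmem x (hAV hx))
    · rw [card_image_of_injOn (hmono.injOn.mono hAV), hunif A hA]
    · obtain ⟨x, hxA, rfl⟩ := mem_image.1 (hAJ.symm ▸ mem_univ j)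
      exact ⟨_, mem_inter.2 ⟨mem_image_of_mem _ hxA, hmem x (hAV hxA)⟩⟩

variable {t N : ℕ}

section AddColor

variable {G : Fin t → Finset (Finset ℕ)} (hN : Arrows G N)
  (hG : ∀ i, ∀ A ∈ G i, #A = k) (hdisj : ∀ i, (G i : Set (Finset ℕ)).PairwiseDisjoint id)

include hN hG hdisj

lemma Arrows.exists_copyIn_or_forall_eq_zero [NeZero t] {π : ℕ → ℕ} (hπ : Monotone π)
    (W : Finset ℕ) (c : Finset ℕ → Fin (t + 1)) :
    (∃ i, CopyIn (edgeSupport (G i)) (G i) W {A | c A = i.succ}) ∨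
      ∃ B ∈ powersetCard k (range N), ∀ X ∈ powersetCard k W, B ⊆ X.image π → c X = 0 := by
  refine or_iff_not_imp_right.2 fun h ↦ ?_
  have hnonzero : ∀ B ∈ powersetCard k (range N), ∃ X ∈ powersetCard k W,
      B ⊆ X.image π ∧ ∃ i : Fin t, c X = i.succ := by
    push Not at h
    intro B hB
    obtain ⟨X, hX, hBX, hc⟩ := h B hB
    exact ⟨X, hX, hBX, Fin.eq_succ_of_ne_zero hc⟩
  choose! X hXW hBX d hd using hnonzero
  obtain ⟨i, f, hf, hfN, hfd⟩ := hN 0 d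
  refine ⟨i, copyIn_of_lift (hdisj i) hπ hf fun A hA ↦ ?_⟩
  have hAS := subset_edgeSupport hA
  have hB : A.image f ∈ powersetCard k (range N) := by
    refine mem_powersetCard.2 ⟨image_subset_iff.2 fun x hx ↦ ?_, ?_⟩
    · simpa using hfN (hAS hx)
    · rw [card_image_of_injOn (hf.injOn.mono hAS), hG i A hA]
  obtain ⟨hXsub, hXcard⟩ := mem_powersetCard.1 (hXW _ hB)
  refine ⟨X (A.image f), ?_, hXsub, (hXcard.trans (hG i A hA).symm).le, hBX _ hB⟩
  exact (hd _ hB).trans (congrArg Fin.succ (hfd A hA))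

theorem NestedToDepth.exists_copyIn_or_copyIn [NeZero t] {s : ℕ} (h : NestedToDepth k s V E)
    (hE : ∀ A ∈ E, #A = k) (c : Finset ℕ → Fin (t + 1)) (a : ℕ) :
    (∃ i, CopyIn (edgeSupport (G i)) (G i) (Ico a (a + N ^ s)) {A | c A = i.succ}) ∨
      CopyIn V E (Ico a (a + N ^ s)) {A | c A = 0} := by
  induction h generalizing a with
  | @zero V hV =>
    have hmono : StrictMonoOn (fun _ ↦ a) V := fun x hx y hy hxy ↦
      (hxy.ne (card_le_one.1 hV x hx y hy)).elim
    exact .inr ⟨fun _ ↦ a, hmono, by simp [Set.MapsTo], by simp⟩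
  | @succ s V E J hJ hJE _ ih =>
    refine or_iff_not_imp_left.2 fun hred ↦ ?_
    have hπ : Monotone fun x ↦ (x - a) / N ^ s := fun x y hxy ↦
      Nat.div_le_div_right (Nat.sub_le_sub_right hxy a)
    obtain ⟨B, hB, hBc⟩ := (hN.exists_copyIn_or_forall_eq_zero hG hdisj hπ
      (Ico a (a + N ^ (s + 1))) c).resolve_left hred
    obtain ⟨hBN, hBk⟩ := mem_powersetCard.1 hB
    let β := B.orderEmbOfFin hBk
    let P : Fin k → Finset ℕ := fun j ↦ Ico (a + β j * N ^ s) (a + β j * N ^ s + N ^ s)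
    have hPW : ∀ j, P j ⊆ Ico a (a + N ^ (s + 1)) := fun j ↦ by
      rw [pow_succ']
      exact Ico_block_subset (mem_range.1 (hBN (B.orderEmbOfFin_mem hBk j)))
    refine copyIn_of_parts hJ hJE hE hPW (fun i j hij x hx y hy ↦ ?_) (fun j ↦ ?_)
      fun X hX hXP ↦ hBc X hX fun b hb ↦ ?_
    · refine hπ.reflect_lt ?_
      simpa only [sub_div_eq_of_mem_block hx, sub_div_eq_of_mem_block hy] using β.strictMono hij
    · refine (ih j (fun A hA ↦ hE A (mem_filter.1 hA).1) _).resolve_left fun ⟨i, hi⟩ ↦ ?_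
      exact hred ⟨i, hi.mono (hPW j)⟩
    · obtain ⟨j, rfl⟩ : b ∈ Set.range β := by simpa [β] using hb
      obtain ⟨x, hx⟩ := hXP j
      rw [mem_inter] at hx
      exact mem_image.2 ⟨x, hx.1, sub_div_eq_of_mem_block hx.2⟩

theorem Arrows.cons [NeZero t] {s : ℕ} (h : NestedToDepth k s (edgeSupport E) E)
    (hE : ∀ A ∈ E, #A = k) : Arrows (Fin.cons E G : Fin (t + 1) → _) (N ^ s) := by
  intro a c
  rcases h.exists_copyIn_or_copyIn hN hG hdisj hE c a with ⟨i, hi⟩ | h0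
  · exact ⟨i.succ, hi⟩
  · exact ⟨0, h0⟩

end AddColor

lemma arrows_one (hE : #(edgeSupport E) ≤ N) : Arrows (fun _ : Fin 1 ↦ E) N := by
  intro a c
  refine ⟨0, fun x ↦ a + Nat.count (· ∈ edgeSupport E) x, fun x hx y _ hxy ↦ ?_, fun x hx ↦ ?_,
    fun _ _ ↦ Subsingleton.elim _ _⟩
  · exact Nat.add_lt_add_left (Nat.count_strict_mono hx hxy) a
  · have hlt : Nat.count (· ∈ edgeSupport E) x < #(edgeSupport E) :=
      (Nat.count_lt_card (edgeSupport E).finite_toSet hx).trans_eq (by rw [finite_toSet_toFinset])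
    exact mem_coe.2 (mem_Ico.2 ⟨Nat.le_add_right _ _, Nat.add_lt_add_left (hlt.trans_le hE) a⟩)

theorem arrows_of_nestedToDepth {s : ℕ} (h : NestedToDepth k s (edgeSupport E) E)
    (hunif : ∀ A ∈ E, #A = k) (hE : (E : Set (Finset ℕ)).PairwiseDisjoint id)
    (hN : #(edgeSupport E) ≤ N) (t : ℕ) : Arrows (fun _ : Fin (t + 1) ↦ E) (N ^ s ^ t) := by
  induction t with
  | zero => simpa using arrows_one hN
  | succ t ih =>
    rw [pow_succ, pow_mul]
    convert ih.cons (fun _ ↦ hunif) (fun _ ↦ hE) h hunif using 1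
    exact funext <| Fin.cases rfl fun _ ↦ rfl

end Ramsey

lemma exists_strictMono_eqOn_Icc {f : ℕ → ℕ} {n N : ℕ} (hf : StrictMonoOn f (Icc 1 n))
    (hfN : Set.MapsTo f (Icc 1 n) (Icc 1 N)) :
    ∃ g : ℕ → ℕ, StrictMono g ∧ Set.EqOn g f (Icc 1 n) := by
  simp only [StrictMonoOn, Set.MapsTo, coe_Icc, Set.mem_Icc] at hf hfN
  refine ⟨fun x ↦ if x = 0 then 0 else if x ≤ n then f x else N + x, ?_, ?_⟩
  · intro x y hxy
    grind
  · intro x hx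
    grind

theorem ORnum_le_of_arrows {k t N : ℕ} {G : Fin t → OrderedHypergraph}
    (hG : ∀ i, ∀ A ∈ (G i).edges, #A = k)
    (hsupp : ∀ i, edgeSupport (G i).edges = Icc 1 (G i).n)
    (hN : Arrows (fun i ↦ (G i).edges) N) : ORnum k G ≤ N := by
  refine Nat.sInf_le fun c ↦ ?_
  obtain ⟨i, f, hf, hfN, hfc⟩ := hN 1 c
  have hIco : Ico 1 (1 + N) = Icc 1 N := by grind
  simp only [hsupp, hIco] at hf hfN
  obtain ⟨g, hg, hgf⟩ := exists_strictMono_eqOn_Icc hf hfN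
  have hgN : ∀ v ∈ Icc 1 (G i).n, g v ∈ Icc 1 N := fun v hv ↦ hgf hv ▸ hfN hv
  refine ⟨i, g, hg, hgN, fun A hA ↦ ?_⟩
  have hAn : A ⊆ Icc 1 (G i).n := hsupp i ▸ subset_edgeSupport hA
  have hAgf : A.image g = A.image f := image_congr fun x hx ↦ hgf (hAn hx)
  refine mem_filter.2 ⟨mem_powersetCard.2 ⟨?_, ?_⟩, hAgf ▸ hfc A hA⟩
  · exact image_subset_iff.2 fun x hx ↦ hgN x (hAn hx)
  · rw [card_image_of_injective _ hg.injective, hG i A hA]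

theorem ordered_ramsey_nestable_matching_general (k e t : ℕ) (he : 1 ≤ e) (ht : 1 ≤ t)
    (M : OrderedHypergraph) (hn : M.n = k * e) (hecard : M.edges.card = e)
    (huniform : ∀ A ∈ M.edges, A.card = k)
    (hdisj : ∀ A ∈ M.edges, ∀ B ∈ M.edges, A ≠ B → Disjoint A B)
    (hsupp : edgeSupport M.edges = Finset.Icc 1 (k * e))
    (hnest : KNestable k M.edges) :
    ORnum k (fun _ : Fin t => M) ≤ (e * k) ^ ((2 * e - 1) ^ (t - 1)) := by
  have hk : 2 ≤ k := hnest.two_le (card_pos.1 (by lia))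
  have hdepth : NestedToDepth k (2 * e - 1) (edgeSupport M.edges) M.edges :=
    hnest.nestedToDepth hk subset_rfl (by
      rw [sdiff_self, bot_eq_empty, card_empty]
      lia)
  have hcard : #(edgeSupport M.edges) ≤ e * k := by simp [hsupp, mul_comm]
  obtain ⟨t, rfl⟩ : ∃ t', t = t' + 1 := ⟨t - 1, by lia⟩
  exact ORnum_le_of_arrows (fun _ ↦ huniform) (fun _ ↦ hn ▸ hsupp)
    (arrows_of_nestedToDepth hdepth huniform hdisj hcard t)

/-- For `k ≥ 3`, `e ≥ 2`, `t ≥ 1`, and a `k`-nestable ordered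
`k`-uniform matching `M` with `e` edges (on vertex set `{1, …, ke}`, which its edges
partition), `OR_t(M) ≤ (ek)^{(2e-1)^{t-1}}`. -/
theorem ordered_ramsey_nestable_matching (k e t : ℕ) (hk : 3 ≤ k) (he : 2 ≤ e)
    (ht : 1 ≤ t) (M : OrderedHypergraph) (hn : M.n = k * e) (hecard : M.edges.card = e)
    (huniform : ∀ A ∈ M.edges, A.card = k)
    (hdisj : ∀ A ∈ M.edges, ∀ B ∈ M.edges, A ≠ B → Disjoint A B)
    (hsupp : edgeSupport M.edges = Finset.Icc 1 (k * e))
    (hnest : KNestable k M.edges) :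
    ORnum k (fun _ : Fin t => M) ≤ (e * k) ^ ((2 * e - 1) ^ (t - 1)) :=
  ordered_ramsey_nestable_matching_general k e t (by lia) ht M hn hecard huniform hdisj hsupp hnest
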